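/- Let D be a finite group with an abelian subgroup H of index at most 2 such that every element of D not in H has order 2 and acts on H by inversion. Then every subgroup of D is generated by at most 3 elements, provided H has rank at most 2. -/

import Mathlib

/-!
The number of generators needed for an arbitrary subgroup is subadditive in extensions
`1 → N → G → Q → 1`: a subgroup `K` of `G` is generated by generators of `K ∩ N` together with
lifts of generators of the image of `K` in `Q`. A cyclic group contributes `1`, so by induction an
abelian group with `n` generators contributes `n`. Here `H` is abelian with two generators and
`D ⧸ H`, having order at most two, is cyclic.
-/

open Subgroup

/-- A group `G` has subgroup rank at most `n` if each of its subgroups, and not only `G` itself,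
is generated by at most `n` elements. -/
def SubgroupRankLE (G : Type*) [Group G] (n : ℕ) : Prop :=
  ∀ K : Subgroup G, ∃ s : Finset G, s.card ≤ n ∧ closure (s : Set G) = K

section

variable {G Q : Type*} [Group G] [Group Q]

theorem le_of_inf_ker_le_of_map_le_map (f : G →* Q) {K L : Subgroup G} (hLK : L ≤ K)
    (hker : K ⊓ f.ker ≤ L) (hmap : K.map f ≤ L.map f) : K ≤ L := by
  intro k hk
  obtain ⟨l, hl, hlk⟩ := hmap (mem_map_of_mem f hk)
  have hmem : l⁻¹ * k ∈ K ⊓ f.ker := ⟨K.mul_mem (K.inv_mem (hLK hl)) hk, by simp [hlk]⟩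
  exact (L.mul_mem_cancel_left (L.inv_mem hl)).1 (hker hmem)

theorem exists_finset_map_closure_eq (f : G →* Q) {K : Subgroup G} {t : Finset Q}
    (ht : closure (t : Set Q) = K.map f) :
    ∃ s : Finset G, s.card ≤ t.card ∧ closure (s : Set G) ≤ K ∧
      (closure (s : Set G)).map f = K.map f := by
  classical
  have hlift (q : t) : ∃ g ∈ K, f g = q := mem_map.1 (ht ▸ subset_closure q.2)
  choose g hgK hfg using hlift
  refine ⟨t.attach.image g, Finset.card_image_le.trans_eq t.card_attach, ?_, ?_⟩
  · simpa [closure_le, Set.range_subset_iff] using hgK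
  · rw [MonoidHom.map_closure, ← ht]
    congr 1
    ext q
    simp [hfg]

theorem SubgroupRankLE.exists_finset_of_le {n : ℕ} {N K : Subgroup G}
    (hN : SubgroupRankLE N n) (hKN : K ≤ N) :
    ∃ s : Finset G, s.card ≤ n ∧ closure (s : Set G) = K := by
  classical
  obtain ⟨s, hcard, hs⟩ := hN (K.subgroupOf N)
  refine ⟨s.image N.subtype, Finset.card_image_le.trans hcard, ?_⟩
  rw [Finset.coe_image, ← MonoidHom.map_closure, hs, map_subgroupOf_eq_of_le hKN]

theorem SubgroupRankLE.of_ker {m n : ℕ} (f : G →* Q) (hker : SubgroupRankLE f.ker m)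
    (hQ : SubgroupRankLE Q n) : SubgroupRankLE G (m + n) := by
  classical
  intro K
  obtain ⟨s, hs_card, hs⟩ := hker.exists_finset_of_le (inf_le_right : K ⊓ f.ker ≤ f.ker)
  obtain ⟨q, hq_card, hq⟩ := hQ (K.map f)
  obtain ⟨t, ht_card, htK, ht⟩ := exists_finset_map_closure_eq f hq
  have hle : closure ((s ∪ t : Finset G) : Set G) ≤ K := by
    rw [Finset.coe_union, Subgroup.closure_union, hs]
    exact sup_le inf_le_left htK
  refine ⟨s ∪ t, (Finset.card_union_le s t).trans (by lia),
    hle.antisymm (le_of_inf_ker_le_of_map_le_map f hle ?_ ?_)⟩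
  · rw [← hs]
    exact closure_mono (by simp)
  · rw [← ht]
    exact map_mono (closure_mono (by simp))

theorem SubgroupRankLE.of_quotient {m n : ℕ} {N : Subgroup G} [N.Normal]
    (hN : SubgroupRankLE N m) (hQ : SubgroupRankLE (G ⧸ N) n) : SubgroupRankLE G (m + n) :=
  .of_ker (QuotientGroup.mk' N) ((QuotientGroup.ker_mk' N).symm ▸ hN) hQ

theorem subgroupRankLE_one_of_isCyclic [IsCyclic G] : SubgroupRankLE G 1 := by
  intro K
  obtain ⟨g, hg⟩ := K.isCyclic_iff_exists_zpowers_eq_top.1 inferInstance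
  exact ⟨{g}, by simp, by rw [Finset.coe_singleton, ← zpowers_eq_closure, hg]⟩

theorem subgroupRankLE_zero_of_subsingleton [Subsingleton G] : SubgroupRankLE G 0 :=
  fun _ ↦ ⟨∅, by simp, Subsingleton.elim _ _⟩

theorem closure_range_comp_succ_eq_top {f : G →* Q} (hf : Function.Surjective f) {n : ℕ}
    {v : Fin (n + 1) → G} (hv : closure (Set.range v) = ⊤) (h0 : f (v 0) = 1) :
    closure (Set.range fun i : Fin n ↦ f (v i.succ)) = ⊤ :=
  calc
    closure (Set.range fun i : Fin n ↦ f (v i.succ)) = closure (Set.range (f ∘ v)) := by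
      simp [Fin.range_fin_succ, h0, Fin.tail_def]
    _ = (closure (Set.range v)).map f := by rw [Set.range_comp, MonoidHom.map_closure]
    _ = ⊤ := by rw [hv, map_top_of_surjective f hf]

theorem subgroupRankLE_of_closure_range_eq_top {A : Type*} [CommGroup A] {n : ℕ} {v : Fin n → A}
    (hv : closure (Set.range v) = ⊤) : SubgroupRankLE A n := by
  induction n generalizing A with
  | zero =>
    have : Subsingleton A := by
      rwa [Set.range_eq_empty, Subgroup.closure_empty, subsingleton_iff_bot_eq_top,
        Subgroup.subsingleton_iff] at hv
    exact subgroupRankLE_zero_of_subsingleton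
  | succ n ih =>
    have hmk : QuotientGroup.mk' (zpowers (v 0)) (v 0) = 1 := by simp
    have := SubgroupRankLE.of_quotient (N := zpowers (v 0)) subgroupRankLE_one_of_isCyclic
      (ih (closure_range_comp_succ_eq_top (QuotientGroup.mk'_surjective _) hv hmk))
    rwa [add_comm]

theorem closure_range_codRestrict_eq_top {ι : Type*} {H : Subgroup G} {v : ι → G}
    (hv : closure (Set.range v) = H) (hmem : ∀ i, v i ∈ H) :
    closure (Set.range (Set.codRestrict v H hmem)) = ⊤ := by
  apply map_injective H.subtype_injective
  rw [MonoidHom.map_closure, ← Set.range_comp, ← MonoidHom.range_eq_map, range_subtype]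
  exact hv

theorem exists_normal_isCyclic_quotient_of_index_le_two {H : Subgroup G} [H.FiniteIndex]
    (hH : H.index ≤ 2) : ∃ _ : H.Normal, IsCyclic (G ⧸ H) := by
  obtain h1 | h2 : H.index = 1 ∨ H.index = 2 := by
    have := H.index_ne_zero_of_finite
    lia
  · obtain rfl := index_eq_one.1 h1
    have := QuotientGroup.subsingleton_quotient_top (G := G)
    exact ⟨inferInstance, isCyclic_of_subsingleton⟩
  · have : H.Normal := normal_of_index_eq_two h2
    exact ⟨this, isCyclic_of_prime_card (p := 2) h2⟩

end

open scoped IsMulCommutative in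
theorem stmt1_general {D : Type*} [Group D] (H : Subgroup D) [H.Normal] [IsMulCommutative H]
    [IsCyclic (D ⧸ H)] {n : ℕ} (v : Fin n → D) (hv : closure (Set.range v) = H) :
    SubgroupRankLE D (n + 1) :=
  have hmem (i : Fin n) : v i ∈ H := hv ▸ subset_closure (Set.mem_range_self i)
  .of_quotient (subgroupRankLE_of_closure_range_eq_top (closure_range_codRestrict_eq_top hv hmem))
    subgroupRankLE_one_of_isCyclic

theorem stmt1 {D : Type*} [Group D] [Fintype D] (H : Subgroup D)
    (habel : ∀ x y : D, x ∈ H → y ∈ H → x * y = y * x)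
    (hrank : ∃ a b : D, Subgroup.closure {a, b} = H)
    (hindex : H.index ≤ 2)
    (hdih : ∀ d : D, d ∉ H → d ^ 2 = 1 ∧ ∀ h ∈ H, d * h * d⁻¹ = h⁻¹) :
    ∀ K : Subgroup D, ∃ s : Finset D, s.card ≤ 3 ∧ Subgroup.closure (s : Set D) = K := by
  have : IsMulCommutative H := .of_setLike_mul_comm fun x hx y hy ↦ habel x y hx hy
  obtain ⟨a, b, hab⟩ := hrank
  obtain ⟨_, _⟩ := exists_normal_isCyclic_quotient_of_index_le_two hindex
  exact stmt1_general H ![a, b] (by simpa [Set.pair_comm] using hab)
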